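/- Let n ≥ 1 and 1 ≤ r ≤ n−1. Then k(r,n) = (n−r) · k(r, n−1) + |K_L(r,n)|. -/

import Mathlib

/-!
The value `n + 1` of `w ∈ K(r, n + 1)` lies either in one of the first `r` positions, which gives
`K_L(r, n + 1)`, or in one of the `n + 1 - r` positions after the split.  In the second case the
top value takes part in no occurrence of `3|12` or `23|1`: in both patterns the entries to the right
of the split are smaller than some entry to its left.  Hence inserting the top value at a
(`0`-based) position `p ≥ r` neither creates nor destroys an occurrence (`mem_splitK_insertTop`),
and `(p, σ) ↦ insertTop p σ` is a bijection from `{p | r ≤ p} × K(r, n)` onto the second class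
(`card_filter_not_left`).
-/

open scoped Classical

/-- `w` contains the split pattern `3|12` with respect to position `r`.
Positions and values are 1-indexed in the paper; here `i : Fin n` represents
position `(i : ℕ) + 1` and the value at position `i` is `(w i : ℕ) + 1`.
The condition `i₁ ≤ r < i₂` (1-indexed) becomes `(i₁ : ℕ) < r ∧ r ≤ (i₂ : ℕ)`. -/
def Contains312 (n r : ℕ) (w : Equiv.Perm (Fin n)) : Prop :=
  ∃ i₁ i₂ i₃ : Fin n, i₁ < i₂ ∧ i₂ < i₃ ∧ (i₁ : ℕ) < r ∧ r ≤ (i₂ : ℕ) ∧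
    w i₂ < w i₃ ∧ w i₃ < w i₁

/-- `w` contains the split pattern `23|1` with respect to position `r`. -/
def Contains231 (n r : ℕ) (w : Equiv.Perm (Fin n)) : Prop :=
  ∃ i₁ i₂ i₃ : Fin n, i₁ < i₂ ∧ i₂ < i₃ ∧ (i₂ : ℕ) < r ∧ r ≤ (i₃ : ℕ) ∧
    w i₃ < w i₁ ∧ w i₁ < w i₂

/-- `K(r,n)`: the permutations of `{1,…,n}` that avoid both split patterns
`3|12` and `23|1` with respect to position `r`. -/
noncomputable def splitK (r n : ℕ) : Finset (Equiv.Perm (Fin n)) :=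
  Finset.univ.filter fun w => ¬ Contains312 n r w ∧ ¬ Contains231 n r w

/-- `k(r,n) = |K(r,n)|`. -/
noncomputable def splitk (r n : ℕ) : ℕ := (splitK r n).card

/-- `K_L(r,n)`: those `w ∈ K(r,n)` for which the value `n` occurs among the
first `r` positions of the one-line notation. -/
noncomputable def splitKL (r n : ℕ) : Finset (Equiv.Perm (Fin n)) :=
  (splitK r n).filter fun w => ∃ p : Fin n, (p : ℕ) < r ∧ (w p : ℕ) + 1 = n

/-- `K_R(r,n)`: those `w ∈ K(r,n)` for which the value `n` occurs among the
last `n - r` positions of the one-line notation. -/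
noncomputable def splitKR (r n : ℕ) : Finset (Equiv.Perm (Fin n)) :=
  (splitK r n).filter fun w => ∃ p : Fin n, r ≤ (p : ℕ) ∧ (w p : ℕ) + 1 = n

/-- `φₙ`: delete the top value `n+1` from the one-line notation of
`w ∈ S_{n+1}`.  If `p = w⁻¹(top)`, then `(phiMap w) k = w k` for `k < p` and
`(phiMap w) k = w (k+1)` for `k ≥ p` (values cast down past the removed top value). -/
def phiMap {n : ℕ} (w : Equiv.Perm (Fin (n + 1))) : Equiv.Perm (Fin n) :=
  Equiv.removeNone
    ((finSuccEquiv' (w.symm (Fin.last n))).symm.trans (w.trans (finSuccEquiv' (Fin.last n))))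

/-- `a(r,s) = k(r, r+s)/(r!·s!) - 1` as a rational number. -/
noncomputable def aRat (r s : ℕ) : ℚ :=
  (splitk r (r + s) : ℚ) / ((Nat.factorial r : ℚ) * (Nat.factorial s : ℚ)) - 1

/-- The permutation obtained from the one-line notation of `σ` by inserting the new largest value
at position `p`; on `Fin (n + 1)`, the index `p` is `0`-based and the new value is `Fin.last n`. -/
def insertTop {n : ℕ} (p : Fin (n + 1)) (σ : Equiv.Perm (Fin n)) : Equiv.Perm (Fin (n + 1)) :=
  (finSuccEquiv' p).trans (σ.optionCongr.trans (finSuccEquiv' (Fin.last n)).symm)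

lemma insertTop_self {n : ℕ} (p : Fin (n + 1)) (σ : Equiv.Perm (Fin n)) :
    insertTop p σ p = Fin.last n := by
  simp [insertTop]

lemma insertTop_succAbove {n : ℕ} (p : Fin (n + 1)) (σ : Equiv.Perm (Fin n)) (k : Fin n) :
    insertTop p σ (p.succAbove k) = (σ k).castSucc := by
  simp [insertTop]

/-- A permutation is recovered by deleting its top value and inserting it again. -/
lemma insertTop_phiMap {n : ℕ} (w : Equiv.Perm (Fin (n + 1))) :
    insertTop (w.symm (Fin.last n)) (phiMap w) = w := by
  have h : (phiMap w).optionCongr = (finSuccEquiv' (w.symm (Fin.last n))).symm.trans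
      (w.trans (finSuccEquiv' (Fin.last n))) := by
    rw [phiMap, map_equiv_removeNone]
    simp [Equiv.Perm.one_def]
  ext x
  simp [insertTop, h]

lemma insertTop_injective {n : ℕ} {p q : Fin (n + 1)} {σ τ : Equiv.Perm (Fin n)}
    (h : insertTop p σ = insertTop q τ) : p = q ∧ σ = τ := by
  have hpq : p = q := by
    apply (insertTop q τ).injective
    rw [insertTop_self, ← h, insertTop_self]
  subst hpq
  refine ⟨rfl, Equiv.ext fun k => ?_⟩
  have hk := congrArg (fun e => e (p.succAbove k)) h
  simpa [insertTop_succAbove] using hk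

/-- Inserting a position at or after the split keeps every position on its side of the split. -/
lemma succAbove_lt_iff_of_le {n r : ℕ} {p : Fin (n + 1)} (hp : r ≤ (p : ℕ)) (k : Fin n) :
    (p.succAbove k : ℕ) < r ↔ (k : ℕ) < r := by
  rcases lt_or_ge k.castSucc p with h | h
  · rw [Fin.succAbove_of_castSucc_lt _ _ h, Fin.val_castSucc]
  · rw [Fin.succAbove_of_le_castSucc _ _ h, Fin.val_succ]
    have : (p : ℕ) ≤ k := h
    omega

lemma le_succAbove_iff_of_le {n r : ℕ} {p : Fin (n + 1)} (hp : r ≤ (p : ℕ)) (k : Fin n) :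
    r ≤ (p.succAbove k : ℕ) ↔ r ≤ (k : ℕ) := by
  simpa only [not_lt] using not_congr (succAbove_lt_iff_of_le hp k)

/-- An index whose value lies below another value is not the index of the top value. -/
lemma exists_succAbove_of_insertTop_lt {n : ℕ} {p i j : Fin (n + 1)} {σ : Equiv.Perm (Fin n)}
    (h : insertTop p σ i < insertTop p σ j) : ∃ k, p.succAbove k = i := by
  apply Fin.exists_succAbove_eq
  rintro rfl
  rw [insertTop_self] at h
  exact absurd h (not_lt.2 (Fin.le_last _))

lemma contains312_insertTop {n r : ℕ} {p : Fin (n + 1)} (hp : r ≤ (p : ℕ))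
    (σ : Equiv.Perm (Fin n)) : Contains312 (n + 1) r (insertTop p σ) ↔ Contains312 n r σ := by
  constructor
  · rintro ⟨i₁, i₂, i₃, h12, h23, h1, h2, hw, hw'⟩
    obtain ⟨k₁, rfl⟩ : ∃ k, p.succAbove k = i₁ := by
      apply Fin.exists_succAbove_eq
      rintro rfl
      omega
    obtain ⟨k₂, rfl⟩ := exists_succAbove_of_insertTop_lt hw
    obtain ⟨k₃, rfl⟩ := exists_succAbove_of_insertTop_lt hw'
    simp only [insertTop_succAbove, Fin.castSucc_lt_castSucc_iff, Fin.succAbove_lt_succAbove_iff,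
      succAbove_lt_iff_of_le hp, le_succAbove_iff_of_le hp] at *
    exact ⟨k₁, k₂, k₃, h12, h23, h1, h2, hw, hw'⟩
  · rintro ⟨k₁, k₂, k₃, h⟩
    refine ⟨p.succAbove k₁, p.succAbove k₂, p.succAbove k₃, ?_⟩
    simpa only [insertTop_succAbove, Fin.castSucc_lt_castSucc_iff, Fin.succAbove_lt_succAbove_iff,
      succAbove_lt_iff_of_le hp, le_succAbove_iff_of_le hp] using h

lemma contains231_insertTop {n r : ℕ} {p : Fin (n + 1)} (hp : r ≤ (p : ℕ))
    (σ : Equiv.Perm (Fin n)) : Contains231 (n + 1) r (insertTop p σ) ↔ Contains231 n r σ := by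
  constructor
  · rintro ⟨i₁, i₂, i₃, h12, h23, h1, h2, hw, hw'⟩
    obtain ⟨k₂, rfl⟩ : ∃ k, p.succAbove k = i₂ := by
      apply Fin.exists_succAbove_eq
      rintro rfl
      omega
    obtain ⟨k₃, rfl⟩ := exists_succAbove_of_insertTop_lt hw
    obtain ⟨k₁, rfl⟩ := exists_succAbove_of_insertTop_lt hw'
    simp only [insertTop_succAbove, Fin.castSucc_lt_castSucc_iff, Fin.succAbove_lt_succAbove_iff,
      succAbove_lt_iff_of_le hp, le_succAbove_iff_of_le hp] at *
    exact ⟨k₁, k₂, k₃, h12, h23, h1, h2, hw, hw'⟩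
  · rintro ⟨k₁, k₂, k₃, h⟩
    refine ⟨p.succAbove k₁, p.succAbove k₂, p.succAbove k₃, ?_⟩
    simpa only [insertTop_succAbove, Fin.castSucc_lt_castSucc_iff, Fin.succAbove_lt_succAbove_iff,
      succAbove_lt_iff_of_le hp, le_succAbove_iff_of_le hp] using h

lemma mem_splitK_insertTop {n r : ℕ} {p : Fin (n + 1)} (hp : r ≤ (p : ℕ))
    (σ : Equiv.Perm (Fin n)) : insertTop p σ ∈ splitK r (n + 1) ↔ σ ∈ splitK r n := by
  simp [splitK, contains312_insertTop hp, contains231_insertTop hp]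

/-- The permutation has its top value among the first `r` positions iff the position of that value
is `< r`. -/
lemma top_left_iff {n r : ℕ} (w : Equiv.Perm (Fin (n + 1))) :
    (∃ p : Fin (n + 1), (p : ℕ) < r ∧ (w p : ℕ) + 1 = n + 1) ↔
      (w.symm (Fin.last n) : ℕ) < r := by
  constructor
  · rintro ⟨p, hp, hw⟩
    have : w p = Fin.last n := Fin.ext (by simpa using hw)
    rwa [← this, Equiv.symm_apply_apply]
  · intro h
    exact ⟨_, h, by simp⟩

lemma card_filter_not_left (n r : ℕ) :
    ((splitK r (n + 1)).filter fun w =>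
      ¬ ∃ p : Fin (n + 1), (p : ℕ) < r ∧ (w p : ℕ) + 1 = n + 1).card =
      (n + 1 - r) * splitk r n := by
  have hcard : (Finset.univ.filter fun p : Fin (n + 1) => r ≤ (p : ℕ)).card = n + 1 - r := by
    have h := Finset.card_filter_add_card_filter_not (s := (Finset.univ : Finset (Fin (n + 1))))
      (fun p : Fin (n + 1) => (p : ℕ) < r)
    simp only [not_lt, Finset.card_univ, Fintype.card_fin, Fin.card_filter_val_lt] at h
    omega
  rw [splitk, ← hcard, ← Finset.card_product]
  symm
  refine Finset.card_bij (fun x _ => insertTop x.1 x.2) ?_ ?_ ?_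
  · rintro ⟨p, σ⟩ h
    simp only [Finset.mem_product, Finset.mem_filter, Finset.mem_univ, true_and] at h
    have hs : (insertTop p σ).symm (Fin.last n) = p := by
      rw [Equiv.symm_apply_eq, insertTop_self]
    rw [Finset.mem_filter, top_left_iff, hs, not_lt]
    exact ⟨(mem_splitK_insertTop h.1 σ).2 h.2, h.1⟩
  · rintro ⟨p, σ⟩ _ ⟨q, τ⟩ _ h
    exact Prod.ext_iff.2 (insertTop_injective h)
  · intro w hw
    rw [Finset.mem_filter, top_left_iff, not_lt] at hw
    refine ⟨(w.symm (Fin.last n), phiMap w), ?_, insertTop_phiMap w⟩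
    simp only [Finset.mem_product, Finset.mem_filter, Finset.mem_univ, true_and]
    refine ⟨hw.2, ?_⟩
    rw [← mem_splitK_insertTop hw.2, insertTop_phiMap]
    exact hw.1

/-- For `1 ≤ r ≤ n`, `k(r, n+1) = ((n+1) - r) · k(r, n) + |K_L(r, n+1)|`. -/
theorem stmt7 (n r : ℕ) (hr : 1 ≤ r) (hrn : r ≤ n) :
    splitk r (n + 1) = (n + 1 - r) * splitk r n + (splitKL r (n + 1)).card := by
  rw [← card_filter_not_left, splitKL, splitk, add_comm (Finset.card _), Finset.card_filter_add_card_filter_not]
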